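/- arXiv:2511.02657 — 2 statements merged into one kernel-verified Lean document; each statement's English description precedes it below -/
import Mathlib

section
/- Let E be a real inner product space, β ∈ [0,1), let (g_k)_{k≥0} be a sequence in E, and let (z_k) satisfy z_0 = 0 and z_{k+1} = β z_k + g_k. Then for every integer K ≥ 1: Σ_{k=0}^{K−1} ‖z_k‖² ≤ (1/(1 − β)²) · Σ_{t=0}^{K−1} ‖g_t‖². -/
open Finset

/-!
Weighting the convexity bound `(r a + b)² ≤ r a² + b² / (1 - r)` by `1 - r` makes `(1 - r) a²` a
potential: each step of a recursion `aₖ₊₁ ≤ r aₖ + bₖ` dissipates `(1 - r)² aₖ²` from it and feeds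
in at most `bₖ²`. Telescoping gives the energy bound, applied to the norms of the buffer.
-/

section OrderedRing

variable {R : Type*} [CommRing R] [LinearOrder R] [IsStrictOrderedRing R] {r : R}

theorem one_sub_mul_mul_add_sq_le (hr : 0 ≤ r) (a b : R) :
    (1 - r) * (r * a + b) ^ 2 ≤ (1 - r) * (r * a ^ 2) + b ^ 2 := by
  have gap_nonneg : 0 ≤ r * ((1 - r) * a - b) ^ 2 := mul_nonneg hr (sq_nonneg _)
  linear_combination gap_nonneg

theorem sum_sq_add_sq_le_of_le_mul_add (hr₀ : 0 ≤ r) (hr₁ : r ≤ 1) {a b : ℕ → R}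
    (ha : ∀ k, 0 ≤ a k) (hab : ∀ k, a (k + 1) ≤ r * a k + b k) (n : ℕ) :
    (1 - r) ^ 2 * ∑ k ∈ range n, a k ^ 2 + (1 - r) * a n ^ 2 ≤
      (1 - r) * a 0 ^ 2 + ∑ k ∈ range n, b k ^ 2 := by
  induction n with
  | zero => simp
  | succ n ih =>
    have potential_le : (1 - r) * a (n + 1) ^ 2 ≤ (1 - r) * (r * a n ^ 2) + b n ^ 2 :=
      calc (1 - r) * a (n + 1) ^ 2
        _ ≤ (1 - r) * (r * a n + b n) ^ 2 :=
          mul_le_mul_of_nonneg_left (pow_le_pow_left₀ (ha _) (hab n) 2) (sub_nonneg.2 hr₁)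
        _ ≤ (1 - r) * (r * a n ^ 2) + b n ^ 2 := one_sub_mul_mul_add_sq_le hr₀ _ _
    rw [sum_range_succ, sum_range_succ]
    linear_combination ih + potential_le

end OrderedRing

theorem momentum_buffer_energy_bound_general
    {𝕜 E : Type*} [SeminormedRing 𝕜] [SeminormedAddCommGroup E] [Module 𝕜 E] [IsBoundedSMul 𝕜 E]
    {β : 𝕜} (hβ : ‖β‖ < 1) {g z : ℕ → E} (hz : ∀ k, z (k + 1) = β • z k + g k) (K : ℕ) :
    ∑ k ∈ range K, ‖z k‖ ^ 2 ≤
      (1 / (1 - ‖β‖) ^ 2) * ((1 - ‖β‖) * ‖z 0‖ ^ 2 + ∑ t ∈ range K, ‖g t‖ ^ 2) := by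
  have one_sub_pos : 0 < 1 - ‖β‖ := sub_pos.2 hβ
  have norm_step (k : ℕ) : ‖z (k + 1)‖ ≤ ‖β‖ * ‖z k‖ + ‖g k‖ := by
    rw [hz k]
    exact norm_add_le_of_le (norm_smul_le _ _) le_rfl
  have energy_le := sum_sq_add_sq_le_of_le_mul_add (norm_nonneg β) hβ.le
    (fun k ↦ norm_nonneg (z k)) norm_step K
  rw [one_div_mul_eq_div, le_div_iff₀' (pow_pos one_sub_pos 2)]
  exact (le_add_of_nonneg_right (by positivity)).trans energy_le

/-- The momentum buffer satisfies Σ_{k=0}^{K−1} ‖z_k‖² ≤ (1/(1−β)²) Σ_{t=0}^{K−1} ‖g_t‖². -/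
theorem momentum_buffer_energy_bound
    {E : Type*} [NormedAddCommGroup E] [InnerProductSpace ℝ E]
    (β : ℝ) (hβ0 : 0 ≤ β) (hβ1 : β < 1)
    (g : ℕ → E) (z : ℕ → E)
    (hz0 : z 0 = 0)
    (hz : ∀ k, z (k + 1) = β • z k + g k)
    (K : ℕ) (hK : 1 ≤ K) :
    ∑ k ∈ range K, ‖z k‖ ^ 2 ≤ (1 / (1 - β) ^ 2) * ∑ t ∈ range K, ‖g t‖ ^ 2 := by
  have norm_β : ‖β‖ = β := Real.norm_of_nonneg hβ0
  simpa [hz0, norm_β] using momentum_buffer_energy_bound_general (norm_β.trans_lt hβ1) hz K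
end

section
/- Let E be a real inner product space, η > 0, β ∈ [0,1), let (g_k)_{k≥0} be a sequence in E, and let (z_k), (y_k), (x_k) satisfy z_0 = 0, z_{k+1} = β z_k + g_k, y_k = β z_{k+1} + g_k, x_{k+1} = x_k − η y_k; define v_k = x_k − (ηβ²/(1−β)) z_k. Let f : E → ℝ be differentiable with gradient ∇f satisfying f(x') − f(x) ≤ ⟨∇f(x), x' − x⟩ + (L/2)‖x' − x‖² for all x, x' ∈ E and some L > 0. Then for every k ≥ 0: f(v_{k+1}) − f(v_k) ≤ (η/(1−β)) ⟨∇f(x_k) − ∇f(v_k), g_k⟩ − (η/(1−β)) ⟨∇f(x_k), g_k⟩ + (η² L / (2(1−β)²)) ‖g_k‖². -/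
open RealInnerProductSpace

theorem byrd_nafl_auxiliary_succ {𝕜 E : Type*} [Field 𝕜] [AddCommGroup E] [Module 𝕜 E]
    {η β : 𝕜} (hβ : β ≠ 1) {g z y x v : ℕ → E}
    (hz : ∀ k, z (k + 1) = β • z k + g k)
    (hy : ∀ k, y k = β • z (k + 1) + g k)
    (hx : ∀ k, x (k + 1) = x k - η • y k)
    (hv : ∀ k, v k = x k - (η * β ^ 2 / (1 - β)) • z k) (k : ℕ) :
    v (k + 1) = v k - (η / (1 - β)) • g k := by
  have one_sub_ne_zero : 1 - β ≠ 0 := sub_ne_zero.mpr hβ.symm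
  set c := η * β ^ 2 / (1 - β) with hc
  -- `c` is the weight for which the momentum `z k` cancels from `v (k + 1) - v k`.
  have momentum_coeff : η * β ^ 2 + c * β = c := by rw [hc]; field_simp; ring
  have direction_coeff : η * (β + 1) + c = η / (1 - β) := by rw [hc]; field_simp; ring
  calc v (k + 1) = x k - (η * β ^ 2 + c * β) • z k - (η * (β + 1) + c) • g k := by
        rw [hv, hx, hy, hz]; module
    _ = v k - (η / (1 - β)) • g k := by rw [momentum_coeff, direction_coeff, hv]

theorem apply_sub_smul_sub_le_of_quadratic_upper_bound
    {E : Type*} [SeminormedAddCommGroup E] [InnerProductSpace ℝ E] {f : E → ℝ} {L : ℝ} {p u : E}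
    (hf : ∀ q, f q - f p ≤ ⟪u, q - p⟫ + L / 2 * ‖q - p‖ ^ 2) (t : ℝ) (d : E) :
    f (p - t • d) - f p ≤ -(t * ⟪u, d⟫) + L / 2 * (t ^ 2 * ‖d‖ ^ 2) := by
  simpa only [sub_sub_cancel_left, inner_neg_right, real_inner_smul_right, norm_neg, norm_smul,
    mul_pow, Real.norm_eq_abs, sq_abs] using hf (p - t • d)

/-- `HasGradientAt` is only available in complete spaces, so the functional `innerSL ℝ (f' p)`
expresses that `f' p` is the gradient. -/
theorem byrd_nafl_descent_lemma_general
    {E : Type*} [NormedAddCommGroup E] [InnerProductSpace ℝ E]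
    {η β L : ℝ} (hβ : β ≠ 1) {g z y x v : ℕ → E}
    (hz : ∀ k, z (k + 1) = β • z k + g k)
    (hy : ∀ k, y k = β • z (k + 1) + g k)
    (hx : ∀ k, x (k + 1) = x k - η • y k)
    (hv : ∀ k, v k = x k - (η * β ^ 2 / (1 - β)) • z k)
    {f : E → ℝ} {f' : E → E}
    (_hdiff : ∀ p, HasFDerivAt f (innerSL ℝ (f' p)) p)
    (hsmooth : ∀ p q : E, f q - f p ≤ ⟪f' p, q - p⟫ + L / 2 * ‖q - p‖ ^ 2) (k : ℕ) :
    f (v (k + 1)) - f (v k) ≤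
      (η / (1 - β)) * ⟪f' (x k) - f' (v k), g k⟫
      - (η / (1 - β)) * ⟪f' (x k), g k⟫
      + (η ^ 2 * L / (2 * (1 - β) ^ 2)) * ‖g k‖ ^ 2 := by
  have one_sub_ne_zero : 1 - β ≠ 0 := sub_ne_zero.mpr hβ.symm
  calc f (v (k + 1)) - f (v k)
      = f (v k - (η / (1 - β)) • g k) - f (v k) := by
        rw [byrd_nafl_auxiliary_succ hβ hz hy hx hv]
    _ ≤ -(η / (1 - β) * ⟪f' (v k), g k⟫) + L / 2 * ((η / (1 - β)) ^ 2 * ‖g k‖ ^ 2) :=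
        apply_sub_smul_sub_le_of_quadratic_upper_bound (hsmooth (v k)) _ _
    _ = _ := by rw [inner_sub_left]; field_simp; ring

/-- Descent lemma along the auxiliary sequence of the Byrd-NAFL recursion:
f(v_{k+1}) − f(v_k) ≤ (η/(1−β))⟨∇f(x_k) − ∇f(v_k), g_k⟩ − (η/(1−β))⟨∇f(x_k), g_k⟩
+ (η²L/(2(1−β)²))‖g_k‖². -/
theorem byrd_nafl_descent_lemma
    {E : Type*} [NormedAddCommGroup E] [InnerProductSpace ℝ E] [CompleteSpace E]
    (η β L : ℝ) (hη : 0 < η) (hβ0 : 0 ≤ β) (hβ1 : β < 1) (hL : 0 < L)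
    (g : ℕ → E) (z y x : ℕ → E)
    (hz0 : z 0 = 0)
    (hz : ∀ k, z (k + 1) = β • z k + g k)
    (hy : ∀ k, y k = β • z (k + 1) + g k)
    (hx : ∀ k, x (k + 1) = x k - η • y k)
    (v : ℕ → E)
    (hv : ∀ k, v k = x k - (η * β ^ 2 / (1 - β)) • z k)
    (f : E → ℝ) (f' : E → E)
    (hdiff : ∀ p, HasGradientAt f (f' p) p)
    (hsmooth : ∀ p q : E, f q - f p ≤ ⟪f' p, q - p⟫ + L / 2 * ‖q - p‖ ^ 2) :
    ∀ k, f (v (k + 1)) - f (v k) ≤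
      (η / (1 - β)) * ⟪f' (x k) - f' (v k), g k⟫
      - (η / (1 - β)) * ⟪f' (x k), g k⟫
      + (η ^ 2 * L / (2 * (1 - β) ^ 2)) * ‖g k‖ ^ 2 := by
  exact byrd_nafl_descent_lemma_general hβ1.ne hz hy hx hv
    (fun p ↦ (hdiff p).hasFDerivAt) hsmooth
end
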